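/- arXiv:quant-ph/9807006 — 2 statements merged into one kernel-verified Lean document; each statement's English description precedes it below -/
import Mathlib

section
/- Let n be a positive natural number and let M, N be n-qubit Pauli-type operators, i.e., each is a scalar c • P where c ∈ {1, -1, i, -i} and P is a Kronecker product of matrices from {I, X, Y, Z}. If there exists a nonzero vector ψ ∈ ℂ^(2^n) with M.mulVec ψ = ψ and N.mulVec ψ = ψ, then M and N commute: M * N = N * M. -/
open Matrix Kronecker

/-- The four single-qubit Pauli matrices: `0 ↦ I`, `1 ↦ X`, `2 ↦ Y`, `3 ↦ Z`. -/
noncomputable def pauli : Fin 4 → Matrix (Fin 2) (Fin 2) ℂ :=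
  ![1, !![0, 1; 1, 0], !![0, -Complex.I; Complex.I, 0], !![1, 0; 0, -1]]

/-- The `n`-fold Kronecker (tensor) product of an assignment of `2 × 2` matrices. -/
noncomputable def kronPow : (n : ℕ) → (Fin n → Matrix (Fin 2) (Fin 2) ℂ) →
    Matrix (Fin (2 ^ n)) (Fin (2 ^ n)) ℂ
  | 0, _ => 1
  | n + 1, f =>
      Matrix.reindex finProdFinEquiv finProdFinEquiv
        ((kronPow n fun k => f k.castSucc) ⊗ₖ f (Fin.last n))

/-- `M` is an `n`-qubit Pauli-type operator: a Kronecker product of Pauli matrices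
together with an overall phase `±1` or `±i`. -/
def IsPauliOp (n : ℕ) (M : Matrix (Fin (2 ^ n)) (Fin (2 ^ n)) ℂ) : Prop :=
  ∃ c ∈ ({1, -1, Complex.I, -Complex.I} : Set ℂ), ∃ f : Fin n → Fin 4,
    M = c • kronPow n fun k => pauli (f k)

/-!
Since any two of `I, X, Y, Z` commute or anticommute, so do any two Kronecker products of them: the
sign of the whole is the product of the signs of the factors. If `M` and `N` anticommute and share
an eigenvector `ψ`, with eigenvalues `a` and `b`, then `a b ψ = M N ψ = -N M ψ = -a b ψ`, which
forces `a b = 0`. This is impossible because Pauli operators are invertible.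
-/

section KroneckerPower

variable {n : ℕ}

theorem kronPow_one : (kronPow n fun _ => 1) = 1 := by
  induction n with
  | zero => rfl
  | succ n ih =>
    simp only [kronPow, ih, one_kronecker_one, reindex_apply, submatrix_one_equiv]
    -- The index types `Fin (2 ^ n * 2)` and `Fin (2 ^ (n + 1))` agree only up to unfolding `^`.
    rfl

theorem kronPow_mul (f g : Fin n → Matrix (Fin 2) (Fin 2) ℂ) :
    (kronPow n fun k => f k * g k) = kronPow n f * kronPow n g := by
  induction n with
  | zero => simp [kronPow]
  | succ n ih =>
    simp only [kronPow, ih, mul_kronecker_mul, reindex_apply]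
    exact (submatrix_mul_equiv _ _ _ finProdFinEquiv.symm _).symm

theorem kronPow_smul {R : Type*} [CommMonoid R] [MulAction R ℂ] [IsScalarTower R ℂ ℂ]
    [SMulCommClass R ℂ ℂ] (c : Fin n → R) (f : Fin n → Matrix (Fin 2) (Fin 2) ℂ) :
    (kronPow n fun k => c k • f k) = (∏ k, c k) • kronPow n f := by
  induction n with
  | zero => simp [kronPow]
  | succ n ih =>
    simp only [kronPow, ih, smul_kronecker, kronecker_smul, smul_smul, reindex_apply,
      submatrix_smul, Pi.smul_apply, Fin.prod_univ_castSucc, mul_comm (c (Fin.last n))]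
    rfl

theorem isUnit_kronPow {f : Fin n → Matrix (Fin 2) (Fin 2) ℂ} (hf : ∀ k, IsUnit (f k)) :
    IsUnit (kronPow n f) :=
  (Pi.isUnit_iff.2 hf).map (MonoidHom.mk ⟨kronPow n, kronPow_one⟩ kronPow_mul)

theorem exists_kronPow_mul_eq_units_smul_mul {f g : Fin n → Matrix (Fin 2) (Fin 2) ℂ}
    (h : ∀ k, ∃ s : ℤˣ, f k * g k = s • (g k * f k)) :
    ∃ s : ℤˣ, kronPow n f * kronPow n g = s • (kronPow n g * kronPow n f) := by
  choose s hs using h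
  refine ⟨∏ k, s k, ?_⟩
  rw [← kronPow_mul, ← kronPow_mul, ← kronPow_smul]
  exact congrArg (kronPow n) (funext hs)

end KroneckerPower

theorem pauli_mul_self (a : Fin 4) : pauli a * pauli a = 1 := by
  fin_cases a <;> simp [pauli, one_fin_two]

theorem isUnit_pauli (a : Fin 4) : IsUnit (pauli a) :=
  .of_mul_eq_one _ (pauli_mul_self a)

theorem pauli_anticommute {a b : Fin 4} (ha : a ≠ 0) (hb : b ≠ 0) (hab : a ≠ b) :
    pauli a * pauli b = -(pauli b * pauli a) := by
  fin_cases a <;> fin_cases b <;> simp_all [pauli]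

theorem exists_pauli_mul_eq_units_smul_mul (a b : Fin 4) :
    ∃ s : ℤˣ, pauli a * pauli b = s • (pauli b * pauli a) := by
  by_cases h : a = 0 ∨ b = 0 ∨ a = b
  · refine ⟨1, ?_⟩
    rcases h with rfl | rfl | rfl <;> simp [pauli]
  · push Not at h
    exact ⟨-1, by simpa using pauli_anticommute h.1 h.2.1 h.2.2⟩

namespace IsPauliOp

variable {n : ℕ} {M N : Matrix (Fin (2 ^ n)) (Fin (2 ^ n)) ℂ}

theorem isUnit (hM : IsPauliOp n M) : IsUnit M := by
  obtain ⟨c, hc, f, rfl⟩ := hM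
  have hc₀ : c ≠ 0 := by rcases hc with rfl | rfl | rfl | rfl <;> simp
  exact (isUnit_kronPow fun k => isUnit_pauli (f k)).smul (Units.mk0 c hc₀)

theorem commute_or_anticommute (hM : IsPauliOp n M) (hN : IsPauliOp n N) :
    M * N = N * M ∨ M * N = -(N * M) := by
  obtain ⟨c, -, f, rfl⟩ := hM
  obtain ⟨d, -, g, rfl⟩ := hN
  obtain ⟨s, hs⟩ := exists_kronPow_mul_eq_units_smul_mul
    fun k => exists_pauli_mul_eq_units_smul_mul (f k) (g k)
  simp only [smul_mul_smul_comm, hs, mul_comm d c]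
  rcases Int.units_eq_one_or s with rfl | rfl <;> simp

end IsPauliOp

section CommonEigenvector

variable {ι R : Type*} [Fintype ι] {v : ι → R} {a b : R}

theorem eigenvalue_ne_zero_of_isUnit [DecidableEq ι] [Semiring R] {M : Matrix ι ι R}
    (hM : IsUnit M) (hv : v ≠ 0) (hMv : M *ᵥ v = a • v) : a ≠ 0 := by
  rintro rfl
  exact hv (mulVec_injective_of_isUnit hM (by simpa using hMv))

theorem eigenvalue_mul_eq_zero_of_anticommute [CommRing R] [IsDomain R] [NeZero (2 : R)]
    {M N : Matrix ι ι R} (h : M * N = -(N * M)) (hv : v ≠ 0) (hMv : M *ᵥ v = a • v)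
    (hNv : N *ᵥ v = b • v) : a * b = 0 := by
  have hMN : (M * N) *ᵥ v = (a * b) • v := by
    rw [← mulVec_mulVec, hNv, mulVec_smul, hMv, smul_smul, mul_comm]
  have hNM : (N * M) *ᵥ v = (a * b) • v := by
    rw [← mulVec_mulVec, hMv, mulVec_smul, hNv, smul_smul]
  have hneg : (a * b) • v = (-(a * b)) • v := by
    rw [← hMN, h, neg_mulVec, hNM, neg_smul]
  have hab : a * b = -(a * b) := smul_left_injective R hv hneg
  have htwo : 2 * (a * b) = 0 := by linear_combination hab
  exact (mul_eq_zero.1 htwo).resolve_left two_ne_zero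

end CommonEigenvector

theorem stabilizer_elements_commute_general {n : ℕ}
    {M N : Matrix (Fin (2 ^ n)) (Fin (2 ^ n)) ℂ} (hM : IsPauliOp n M) (hN : IsPauliOp n N)
    {ψ : Fin (2 ^ n) → ℂ} (hψ : ψ ≠ 0) {a b : ℂ}
    (hMψ : M *ᵥ ψ = a • ψ) (hNψ : N *ᵥ ψ = b • ψ) :
    M * N = N * M := by
  refine (hM.commute_or_anticommute hN).resolve_right fun hanti => ?_
  have ha : a ≠ 0 := eigenvalue_ne_zero_of_isUnit hM.isUnit hψ hMψ
  have hb : b ≠ 0 := eigenvalue_ne_zero_of_isUnit hN.isUnit hψ hNψ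
  exact mul_ne_zero ha hb (eigenvalue_mul_eq_zero_of_anticommute hanti hψ hMψ hNψ)

/-- Two Pauli-group operators stabilizing a common nonzero state commute. -/
theorem stabilizer_elements_commute (n : ℕ) (hn : 0 < n)
    (M N : Matrix (Fin (2 ^ n)) (Fin (2 ^ n)) ℂ)
    (hM : IsPauliOp n M) (hN : IsPauliOp n N)
    (hstab : ∃ ψ : Fin (2 ^ n) → ℂ, ψ ≠ 0 ∧ M.mulVec ψ = ψ ∧ N.mulVec ψ = ψ) :
    M * N = N * M := by
  obtain ⟨ψ, hψ, hMψ, hNψ⟩ := hstab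
  exact stabilizer_elements_commute_general hM hN hψ (a := 1) (b := 1) (by simpa) (by simpa)
end

section
/- Let I be the 2×2 identity over ℂ, CNOT = !![1,0,0,0;0,1,0,0;0,0,0,1;0,0,1,0], Pplus = (1/2) • !![1,1;1,1] (the projector onto |+⟩ = (|0⟩+|1⟩)/√2), and P0 = !![1,0;0,0] (the projector onto |0⟩). Then for all a, b ∈ ℂ, with input (a|0⟩+b|1⟩) ⊗ₜ (1/√2)•![1,0,0,1] ∈ ℂ⁸ (the data qubit joined with the Bell state (|00⟩+|11⟩)/√2 on qubits 2 and 3): ((Pplus ⊗ₖ P0 ⊗ₖ I) * (CNOT ⊗ₖ I)).mulVec (![a,b] ⊗ₜ ((1/√2) • ![1,0,0,1])) = (1/2) • (((1/√2) • ![1,1]) ⊗ₜ ![1,0] ⊗ₜ ![a,b]); that is, after Alice's CNOT from qubit 1 to qubit 2 and projecting qubit 1 onto |+⟩ (X-measurement outcome +1) and qubit 2 onto |0⟩ (Z-measurement outcome +1), qubit 3 holds the original state a|0⟩+b|1⟩. -/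
open Matrix

noncomputable def I2 : Matrix (Fin 2) (Fin 2) ℂ := 1

/-- Controlled-NOT with control on the first qubit. -/
noncomputable def CNOT : Matrix (Fin 4) (Fin 4) ℂ :=
  !![1, 0, 0, 0; 0, 1, 0, 0; 0, 0, 0, 1; 0, 0, 1, 0]

/-- The projector onto `|+⟩ = (|0⟩+|1⟩)/√2`. -/
noncomputable def Pplus : Matrix (Fin 2) (Fin 2) ℂ := (1 / 2 : ℂ) • !![1, 1; 1, 1]

/-- The projector onto `|0⟩`. -/
noncomputable def P0 : Matrix (Fin 2) (Fin 2) ℂ := !![1, 0; 0, 0]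

/-- Kronecker product of square matrices, reindexed to `Fin (m * n)`
with lexicographic (big-endian) ordering of the basis. -/
noncomputable def mkron {m n : ℕ} (A : Matrix (Fin m) (Fin m) ℂ)
    (B : Matrix (Fin n) (Fin n) ℂ) : Matrix (Fin (m * n)) (Fin (m * n)) ℂ :=
  Matrix.reindex finProdFinEquiv finProdFinEquiv (Matrix.kroneckerMap (· * ·) A B)

infixl:100 " ⊗ₖ " => mkron

/-- Kronecker product of vectors, with lexicographic (big-endian) ordering. -/
noncomputable def tkron {m n : ℕ} (v : Fin m → ℂ) (w : Fin n → ℂ) : Fin (m * n) → ℂ :=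
  fun i => v (finProdFinEquiv.symm i).1 * w (finProdFinEquiv.symm i).2

infixl:100 " ⊗ₜ " => tkron

/-!
Let `Ω = ∑ i, eᵢ ⊗ eᵢ`, so that the Bell state is `Ω / √2`. Since `CNOT` carries the row vector
`((1, 1) ⊗ e₀)ᵀ` to `Ωᵀ`, Alice's gate followed by her two projections is the rank-one operator
`½ ((1, 1) ⊗ e₀) Ωᵀ`. Contracting the first two factors of `ψ ⊗ Ω` with `Ωᵀ` leaves `ψ` on the
third (the zigzag identity for `Ω`), and this contraction is the teleportation.
-/

section Kronecker

variable {l m n : ℕ}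

@[simp]
theorem tkron_finProdFinEquiv (v : Fin m → ℂ) (w : Fin n → ℂ) (i : Fin m) (j : Fin n) :
    (v ⊗ₜ w) (finProdFinEquiv (i, j)) = v i * w j := by
  simp [tkron]

theorem smul_tkron (c : ℂ) (v : Fin m → ℂ) (w : Fin n → ℂ) : (c • v) ⊗ₜ w = c • (v ⊗ₜ w) := by
  ext
  simp [tkron, mul_assoc]

theorem tkron_smul (c : ℂ) (v : Fin m → ℂ) (w : Fin n → ℂ) : v ⊗ₜ (c • w) = c • (v ⊗ₜ w) := by
  ext
  simp [tkron, mul_left_comm]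

theorem tkron_sum {ι : Type*} (s : Finset ι) (v : Fin m → ℂ) (w : ι → Fin n → ℂ) :
    v ⊗ₜ (∑ i ∈ s, w i) = ∑ i ∈ s, v ⊗ₜ w i := by
  ext
  simp [tkron, Finset.mul_sum]

theorem cast_finProdFinEquiv_assoc (i : Fin l) (j : Fin m) (k : Fin n) :
    Fin.cast (mul_assoc l m n) (finProdFinEquiv (finProdFinEquiv (i, j), k)) =
      finProdFinEquiv (i, finProdFinEquiv (j, k)) := by
  ext
  simp only [Fin.val_cast, finProdFinEquiv_apply_val]
  ring

theorem tkron_assoc (u : Fin l → ℂ) (v : Fin m → ℂ) (w : Fin n → ℂ) :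
    (u ⊗ₜ (v ⊗ₜ w)) ∘ Fin.cast (mul_assoc l m n) = u ⊗ₜ v ⊗ₜ w := by
  ext p
  obtain ⟨⟨q, k⟩, rfl⟩ := finProdFinEquiv.surjective p
  obtain ⟨⟨i, j⟩, rfl⟩ := finProdFinEquiv.surjective q
  simp [cast_finProdFinEquiv_assoc, mul_assoc]

theorem tkron_dotProduct_tkron (v v' : Fin m → ℂ) (w w' : Fin n → ℂ) :
    (v ⊗ₜ w) ⬝ᵥ (v' ⊗ₜ w') = (v ⬝ᵥ v') * (w ⬝ᵥ w') := by
  simp only [dotProduct, ← finProdFinEquiv.sum_comp, Fintype.sum_prod_type, Finset.sum_mul_sum,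
    tkron_finProdFinEquiv, mul_mul_mul_comm]

theorem mkron_finProdFinEquiv (A : Matrix (Fin m) (Fin m) ℂ) (B : Matrix (Fin n) (Fin n) ℂ)
    (i : Fin m) (j : Fin n) :
    (A ⊗ₖ B) (finProdFinEquiv (i, j)) = A i ⊗ₜ B j := by
  ext
  simp [mkron, tkron]

theorem mkron_mulVec_tkron (A : Matrix (Fin m) (Fin m) ℂ) (B : Matrix (Fin n) (Fin n) ℂ)
    (v : Fin m → ℂ) (w : Fin n → ℂ) : (A ⊗ₖ B) *ᵥ (v ⊗ₜ w) = (A *ᵥ v) ⊗ₜ (B *ᵥ w) := by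
  ext p
  obtain ⟨⟨i, j⟩, rfl⟩ := finProdFinEquiv.surjective p
  simp only [mulVec, mkron_finProdFinEquiv, tkron_dotProduct_tkron, tkron_finProdFinEquiv]

theorem mkron_mul_mkron (A A' : Matrix (Fin m) (Fin m) ℂ) (B B' : Matrix (Fin n) (Fin n) ℂ) :
    (A ⊗ₖ B) * (A' ⊗ₖ B') = (A * A') ⊗ₖ (B * B') := by
  simp only [mkron, reindex_apply, submatrix_mul_equiv, mul_kronecker_mul]

theorem vecMulVec_mkron_vecMulVec (v v' : Fin m → ℂ) (w w' : Fin n → ℂ) :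
    vecMulVec v v' ⊗ₖ vecMulVec w w' = vecMulVec (v ⊗ₜ w) (v' ⊗ₜ w') := by
  ext
  simp [mkron, tkron, vecMulVec_apply, mul_mul_mul_comm]

end Kronecker

section MaximallyEntangled

variable {n : ℕ}

/-- The unnormalized maximally entangled vector `Ω = ∑ i, eᵢ ⊗ eᵢ` of `ℂⁿ ⊗ ℂⁿ`; the normalized
state is `Ω / √n`, which for `n = 2` is the Bell state `(|00⟩ + |11⟩) / √2`. -/
noncomputable def maxEntangled (n : ℕ) : Fin (n * n) → ℂ :=
  ∑ i : Fin n, Pi.single i 1 ⊗ₜ Pi.single i 1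

theorem maxEntangled_dotProduct_tkron (v w : Fin n → ℂ) :
    maxEntangled n ⬝ᵥ (v ⊗ₜ w) = v ⬝ᵥ w := by
  simp only [maxEntangled, sum_dotProduct, tkron_dotProduct_tkron, single_one_dotProduct]
  rfl

theorem vecMulVec_maxEntangled_mkron_one_mulVec (x : Fin (n * n) → ℂ) (ψ : Fin n → ℂ) :
    (vecMulVec x (maxEntangled n) ⊗ₖ (1 : Matrix (Fin n) (Fin n) ℂ)) *ᵥ
        ((ψ ⊗ₜ maxEntangled n) ∘ Fin.cast (mul_assoc n n n)) = x ⊗ₜ ψ := by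
  have regroup : (ψ ⊗ₜ maxEntangled n) ∘ Fin.cast (mul_assoc n n n) =
      ∑ k, ψ ⊗ₜ Pi.single k 1 ⊗ₜ Pi.single k 1 := by
    ext i
    simp [maxEntangled, tkron_sum, ← tkron_assoc]
  have contract (k : Fin n) : vecMulVec x (maxEntangled n) *ᵥ (ψ ⊗ₜ Pi.single k 1) = ψ k • x := by
    rw [vecMulVec_mulVec, maxEntangled_dotProduct_tkron, dotProduct_single_one, op_smul_eq_smul]
  calc
    _ = ∑ k, (ψ k • x) ⊗ₜ Pi.single k 1 := by
      simp only [regroup, mulVec_sum, mkron_mulVec_tkron, contract, one_mulVec]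
    _ = x ⊗ₜ ∑ k, ψ k • Pi.single k 1 := by
      simp only [tkron_sum, smul_tkron, tkron_smul]
    _ = x ⊗ₜ ψ := by
      rw [← pi_eq_sum_univ' ψ]

end MaximallyEntangled

theorem maxEntangled_two : maxEntangled 2 = ![1, 0, 0, 1] := by
  ext i
  fin_cases i <;> simp [maxEntangled, tkron, finProdFinEquiv, Fin.divNat, Fin.modNat]

theorem Pplus_eq_vecMulVec : Pplus = vecMulVec ((1 / 2 : ℂ) • ![1, 1]) ![1, 1] := by
  ext i j
  fin_cases i <;> fin_cases j <;> simp [Pplus, vecMulVec_apply]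

theorem P0_eq_vecMulVec : P0 = vecMulVec ![1, 0] ![1, 0] := by
  ext i j
  fin_cases i <;> fin_cases j <;> simp [P0, vecMulVec_apply]

theorem plus_tkron_zero_vecMul_CNOT :
    ((![1, 1] : Fin 2 → ℂ) ⊗ₜ (![1, 0] : Fin 2 → ℂ)) ᵥ* CNOT = maxEntangled 2 := by
  rw [maxEntangled_two]
  ext i
  fin_cases i <;>
    simp [vecMul, dotProduct, Fin.sum_univ_four, tkron, CNOT, finProdFinEquiv, Fin.divNat,
      Fin.modNat]

theorem Pplus_mkron_P0_mul_CNOT :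
    (Pplus ⊗ₖ P0) * CNOT =
      vecMulVec (((1 / 2 : ℂ) • ![1, 1]) ⊗ₜ ![1, 0]) (maxEntangled 2) := by
  rw [Pplus_eq_vecMulVec, P0_eq_vecMulVec, vecMulVec_mkron_vecMulVec, vecMulVec_mul,
    plus_tkron_zero_vecMul_CNOT]

/-- The `+1, +1`-outcome branch of quantum teleportation: Alice's CNOT from qubit 1 to
qubit 2 followed by projecting qubit 1 onto `|+⟩` and qubit 2 onto `|0⟩` leaves Bob's
qubit 3 holding the original state `a|0⟩ + b|1⟩`. -/
theorem teleportation_plus_plus_branch (a b : ℂ) :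
    (((Pplus ⊗ₖ P0 ⊗ₖ I2) * (CNOT ⊗ₖ I2) : Matrix (Fin 8) (Fin 8) ℂ)).mulVec
        (((![a, b] : Fin 2 → ℂ) ⊗ₜ
          ((1 / (Real.sqrt 2 : ℂ)) • (![1, 0, 0, 1] : Fin 4 → ℂ)) : Fin 8 → ℂ)) =
      (1 / 2 : ℂ) •
        ((((1 / (Real.sqrt 2 : ℂ)) • (![1, 1] : Fin 2 → ℂ)) ⊗ₜ (![1, 0] : Fin 2 → ℂ) ⊗ₜ
          (![a, b] : Fin 2 → ℂ) : Fin 8 → ℂ)) := by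
  set c : ℂ := 1 / (Real.sqrt 2 : ℂ)
  have alice : (Pplus ⊗ₖ P0 ⊗ₖ I2) * (CNOT ⊗ₖ I2) =
      vecMulVec (((1 / 2 : ℂ) • ![1, 1]) ⊗ₜ ![1, 0]) (maxEntangled 2) ⊗ₖ 1 := by
    rw [← Pplus_mkron_P0_mul_CNOT]
    simpa [I2] using mkron_mul_mkron (Pplus ⊗ₖ P0) CNOT I2 I2
  have zigzag := vecMulVec_maxEntangled_mkron_one_mulVec
    (((1 / 2 : ℂ) • ![1, 1]) ⊗ₜ ![1, 0]) ![a, b]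
  calc
    _ = c • (((1 / 2 : ℂ) • (![1, 1] : Fin 2 → ℂ)) ⊗ₜ (![1, 0] : Fin 2 → ℂ) ⊗ₜ
          (![a, b] : Fin 2 → ℂ)) := by
      rw [alice, ← maxEntangled_two, tkron_smul, mulVec_smul]
      -- the `Fin.cast` in `zigzag` is definitionally the identity: both products reduce to `8`
      exact congrArg (c • ·) zigzag
    _ = _ := by
      simp only [smul_tkron, smul_comm c]
end
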